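/- Let l ≥ 2 be an even integer and let p ≥ l+3 be a prime. Then the multiple harmonic sum H({1}^l; 2p-1) = Σ_{1 ≤ k₁ < ⋯ < k_l ≤ 2p-1} 1/(k₁⋯k_l) satisfies v_p( H({1}^l;2p-1) + 2p·B_{p-l-1} ) ≥ 2; that is, H({1}^l;2p-1) ≡ −2p·B_{p-l-1} (mod p²). In particular p divides the numerator of H({1}^l;2p-1). -/

import Mathlib

open Classical in
/-- Multiple harmonic sum `H(s₁,…,s_l; n) = ∑_{1 ≤ k₁ < ⋯ < k_l ≤ n} k₁^{-s₁} ⋯ k_l^{-s_l}`,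
encoded via strictly increasing tuples of indices in `{1,…,n}` (an empty sum is `0`,
and `mhs [] n = 1`). -/
noncomputable def mhs (s : List ℕ) (n : ℕ) : ℚ :=
  ∑ k ∈ Finset.univ.filter
      (fun k : Fin s.length → Fin (n + 1) =>
        StrictMono k ∧ ∀ i, 1 ≤ (k i : ℕ)),
    ∏ i, 1 / (((k i : ℕ) : ℚ) ^ s.get i)

open Classical in
/-- `p`-restricted multiple harmonic sum `H*(s; n)`: same sum with all indices
not divisible by `p`. -/
noncomputable def mhsStar (p : ℕ) (s : List ℕ) (n : ℕ) : ℚ :=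
  ∑ k ∈ Finset.univ.filter
      (fun k : Fin s.length → Fin (n + 1) =>
        StrictMono k ∧ ∀ i, 1 ≤ (k i : ℕ) ∧ ¬ p ∣ (k i : ℕ)),
    ∏ i, 1 / (((k i : ℕ) : ℚ) ^ s.get i)

/-- `q` is divisible by `p ^ n` in the localization of `ℤ` at `p`. -/
def PDvd (p n : ℕ) (q : ℚ) : Prop :=
  ∃ a b : ℤ, ¬ (p : ℤ) ∣ b ∧ q * b = (p : ℚ) ^ n * a

theorem PDvd.add {p n : ℕ} (hp : p.Prime) {q r : ℚ} (hq : PDvd p n q) (hr : PDvd p n r) :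
    PDvd p n (q + r) := by
  obtain ⟨a, b, hb, h⟩ := hq
  obtain ⟨c, d, hd, h'⟩ := hr
  refine ⟨a * d + c * b, b * d, ?_, ?_⟩
  · intro hh
    rcases (Nat.prime_iff_prime_int.mp hp).dvd_or_dvd hh with h1 | h1 <;> contradiction
  · push_cast
    linear_combination (d : ℚ) * h + (b : ℚ) * h'

theorem PDvd.mul {p n m : ℕ} (hp : p.Prime) {q r : ℚ} (hq : PDvd p n q) (hr : PDvd p m r) :
    PDvd p (n + m) (q * r) := by
  obtain ⟨a, b, hb, h⟩ := hq
  obtain ⟨c, d, hd, h'⟩ := hr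
  refine ⟨a * c, b * d, ?_, ?_⟩
  · intro hh
    rcases (Nat.prime_iff_prime_int.mp hp).dvd_or_dvd hh with h1 | h1 <;> contradiction
  · push_cast
    rw [pow_add]
    linear_combination ((r : ℚ) * d) * h + ((p : ℚ) ^ n * a) * h'

theorem PDvd.of_int {p n : ℕ} (hp : p.Prime) {z : ℤ} (h : (p : ℤ) ^ n ∣ z) :
    PDvd p n (z : ℚ) := by
  obtain ⟨c, rfl⟩ := h
  refine ⟨c, 1, ?_, by push_cast; ring⟩
  exact (Nat.prime_iff_prime_int.mp hp).not_dvd_one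

theorem PDvd.int {p : ℕ} (hp : p.Prime) (z : ℤ) : PDvd p 0 (z : ℚ) :=
  PDvd.of_int hp (by simp)

theorem PDvd.neg {p n : ℕ} {q : ℚ} (hq : PDvd p n q) : PDvd p n (-q) := by
  obtain ⟨a, b, hb, h⟩ := hq
  exact ⟨-a, b, hb, by push_cast; linear_combination -h⟩

theorem PDvd.sub {p n : ℕ} (hp : p.Prime) {q r : ℚ} (hq : PDvd p n q) (hr : PDvd p n r) :
    PDvd p n (q - r) := by
  rw [sub_eq_add_neg]; exact hq.add hp hr.neg

theorem PDvd.mono {p n m : ℕ} {q : ℚ} (hq : PDvd p n q) (h : m ≤ n) : PDvd p m q := by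
  obtain ⟨a, b, hb, h'⟩ := hq
  obtain ⟨k, rfl⟩ := Nat.exists_eq_add_of_le h
  exact ⟨(p : ℤ) ^ k * a, b, hb, by push_cast; rw [h', pow_add]; ring⟩

theorem PDvd.cancel {p n : ℕ} (hp : p.Prime) {q : ℚ} {z : ℤ} (hz : ¬ (p : ℤ) ∣ z)
    (hq : PDvd p n (q * z)) : PDvd p n q := by
  obtain ⟨a, b, hb, h⟩ := hq
  refine ⟨a, z * b, ?_, by push_cast; linear_combination h⟩
  intro hh
  rcases (Nat.prime_iff_prime_int.mp hp).dvd_or_dvd hh with h1 | h1 <;> contradiction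

theorem PDvd.cancel_p {p n : ℕ} (hp : p.Prime) {q : ℚ}
    (hq : PDvd p (n + 1) (q * p)) : PDvd p n q := by
  obtain ⟨a, b, hb, h⟩ := hq
  refine ⟨a, b, hb, ?_⟩
  have : (p : ℚ) ≠ 0 := by exact_mod_cast hp.ne_zero
  apply mul_right_cancel₀ this
  rw [pow_succ] at h
  linear_combination h

theorem PDvd.sum {p n : ℕ} (hp : p.Prime) {ι : Type*} (s : Finset ι) (f : ι → ℚ)
    (h : ∀ i ∈ s, PDvd p n (f i)) : PDvd p n (∑ i ∈ s, f i) := by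
  classical
  induction s using Finset.induction_on with
  | empty => exact ⟨0, 1, (Nat.prime_iff_prime_int.mp hp).not_dvd_one, by simp⟩
  | insert a s ha ih =>
    rw [Finset.sum_insert ha]
    exact (h a (by simp)).add hp (ih fun i hi => h i (by simp [hi]))

theorem PDvd.int_dvd {p n : ℕ} (hp : p.Prime) {z : ℤ} (h : PDvd p n (z : ℚ)) :
    (p : ℤ) ^ n ∣ z := by
  obtain ⟨a, b, hb, h⟩ := h
  have h' : z * b = (p : ℤ) ^ n * a := by exact_mod_cast h
  have hc : IsCoprime ((p : ℤ) ^ n) b :=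
    ((Prime.coprime_iff_not_dvd (Nat.prime_iff_prime_int.mp hp)).2 hb).pow_left
  exact hc.dvd_of_dvd_mul_right ⟨a, h'⟩

theorem PDvd.num_dvd {p n : ℕ} (hp : p.Prime) {q : ℚ} (h : PDvd p n q) :
    (p : ℤ) ^ n ∣ q.num := by
  apply PDvd.int_dvd hp
  have := h.mul hp (PDvd.int hp q.den)
  simpa [Rat.mul_den_eq_num] using this

theorem PDvd.val {p n : ℕ} (hp : p.Prime) {q : ℚ} (h : PDvd p n q) :
    q = 0 ∨ (n : ℤ) ≤ padicValRat p q := by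
  by_cases hq : q = 0
  · exact Or.inl hq
  right
  have := Fact.mk hp
  obtain ⟨a, b, hb, h⟩ := h
  have hb0 : (b : ℚ) ≠ 0 := by
    intro h0
    have : b = 0 := by exact_mod_cast h0
    exact hb (this ▸ dvd_zero _)
  have hp0 : (p : ℚ) ≠ 0 := by exact_mod_cast hp.ne_zero
  have ha0 : (a : ℚ) ≠ 0 := by
    intro h0
    rw [h0, mul_zero] at h
    exact (mul_ne_zero hq hb0) h
  have := congrArg (padicValRat p) h
  rw [padicValRat.mul hq hb0, padicValRat.mul (pow_ne_zero _ hp0) ha0, padicValRat.pow,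
    padicValRat.self hp.one_lt, padicValRat.of_int, padicValRat.of_int,
    padicValInt.eq_zero_of_not_dvd hb] at this
  push_cast at this
  omega

theorem nat_not_dvd {p k : ℕ} (h0 : 0 < k) (h : k < p) : ¬ (p : ℤ) ∣ (k : ℤ) := by
  intro hh
  have : p ∣ k := by exact_mod_cast hh
  exact absurd (Nat.le_of_dvd h0 this) (by omega)

theorem bernoulli_integral {p : ℕ} (hp : p.Prime) (n : ℕ) (hn : n + 1 < p) :
    PDvd p 0 (bernoulli n) := by
  induction n using Nat.strong_induction_on with
  | _ n ih =>
    have h := sum_bernoulli (n + 1)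
    rw [Finset.sum_range_succ] at h
    apply PDvd.cancel hp (z := ((n + 1 : ℕ) : ℤ)) (nat_not_dvd (by omega) hn)
    have e : bernoulli n * (((n + 1 : ℕ) : ℤ) : ℚ) = (((if n + 1 = 1 then 1 else 0 : ℤ)) : ℚ)
        - ∑ k ∈ Finset.range n, ((n + 1).choose k : ℚ) * bernoulli k := by
      have hc : ((n + 1).choose n : ℚ) = n + 1 := by simp
      rw [hc] at h
      push_cast
      simp only [Nat.add_eq_right] at h ⊢
      linear_combination h
    rw [e]
    apply PDvd.sub hp (PDvd.int hp _)
    apply PDvd.sum hp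
    intro k hk
    have hk := Finset.mem_range.mp hk
    simpa using (PDvd.int hp ((n + 1).choose k : ℤ)).mul hp (ih k hk (by omega))

theorem power_sum_congr {p : ℕ} (hp : p.Prime) (m : ℕ) (hm : 1 ≤ m) (hmp : m + 1 < p) :
    PDvd p 2 ((∑ i : Fin (p - 1), ((i : ℚ) + 1) ^ m) - p * bernoulli m) := by
  have e1 : (∑ i : Fin (p - 1), ((i : ℚ) + 1) ^ m) = ∑ k ∈ Finset.range p, (k : ℚ) ^ m := by
    obtain ⟨r, rfl⟩ : ∃ r, p = r + 1 := ⟨p - 1, by omega⟩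
    rw [Finset.sum_range_succ', Nat.add_sub_cancel]
    rw [Fin.sum_univ_eq_sum_range (fun i : ℕ => ((i : ℚ) + 1) ^ m)]
    simp; omega
  rw [e1, sum_range_pow, Finset.sum_range_succ]
  have e2 : bernoulli m * ((m + 1).choose m) * (p : ℚ) ^ (m + 1 - m) / (m + 1)
      = p * bernoulli m := by
    have : (m : ℚ) + 1 ≠ 0 := by positivity
    simp
    field_simp
  rw [e2, add_sub_cancel_right]
  apply PDvd.sum hp
  intro i hi
  have hi := Finset.mem_range.mp hi
  apply PDvd.cancel hp (z := ((m + 1 : ℕ) : ℤ)) (nat_not_dvd (by omega) hmp)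
  have : (m : ℚ) + 1 ≠ 0 := by positivity
  have e3 : bernoulli i * ((m + 1).choose i) * (p : ℚ) ^ (m + 1 - i) / (m + 1)
     * (((m + 1 : ℕ) : ℤ) : ℚ) = bernoulli i * ((((m + 1).choose i : ℤ) * (p : ℤ) ^ (m + 1 - i) : ℤ) : ℚ) := by
    push_cast
    field_simp
  rw [e3]
  have := (bernoulli_integral hp i (by omega)).mul hp
    (PDvd.of_int hp (n := 2) (z := ((m + 1).choose i : ℤ) * (p : ℤ) ^ (m + 1 - i))
      (Dvd.dvd.mul_left (pow_dvd_pow _ (by omega)) _))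
  simpa using this

/-- Elementary symmetric functions of `1, …, p-1`. -/
noncomputable def elemS (p m : ℕ) : ℤ :=
  MvPolynomial.aeval (fun i : Fin (p - 1) => ((i : ℕ) : ℤ) + 1) (MvPolynomial.esymm (Fin (p - 1)) ℤ m)

theorem newton_int (p m : ℕ) : (m : ℤ) * elemS p m = (-1) ^ (m + 1) *
    ∑ a ∈ Finset.HasAntidiagonal.antidiagonal m with a.1 < m, (-1) ^ a.1 * elemS p a.1 *
      ∑ i : Fin (p - 1), (((i : ℕ) : ℤ) + 1) ^ a.2 := by
  have := congrArg (MvPolynomial.aeval (fun i : Fin (p - 1) => ((i : ℕ) : ℤ) + 1))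
    (MvPolynomial.mul_esymm_eq_sum (Fin (p - 1)) ℤ m)
  simpa [elemS, MvPolynomial.psum] using this

theorem elemS_zero (p : ℕ) : elemS p 0 = 1 := by simp [elemS]

theorem power_sum_dvd {p : ℕ} (hp : p.Prime) (m : ℕ) (hm : 1 ≤ m) (hmp : m + 1 < p) :
    (p : ℤ) ∣ ∑ i : Fin (p - 1), (((i : ℕ) : ℤ) + 1) ^ m := by
  have h := (power_sum_congr hp m hm hmp).mono (m := 1) (by norm_num)
  have h2 : PDvd p 1 ((p : ℚ) * bernoulli m) := by
    simpa using (PDvd.of_int hp (n := 1) (z := (p : ℤ)) (by simp)).mul hp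
      (bernoulli_integral hp m hmp)
  have h3 := h.add hp h2
  rw [sub_add_cancel] at h3
  have := PDvd.int_dvd hp (n := 1) (z := ∑ i : Fin (p - 1), (((i : ℕ) : ℤ) + 1) ^ m)
    (by push_cast; exact h3)
  simpa using this

theorem elemS_dvd {p : ℕ} (hp : p.Prime) (m : ℕ) (hm : 1 ≤ m) (hmp : m + 1 < p) :
    (p : ℤ) ∣ elemS p m := by
  have h : (p : ℤ) ∣ (m : ℤ) * elemS p m := by
    rw [newton_int]
    apply Dvd.dvd.mul_left
    apply Finset.dvd_sum
    intro a ha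
    simp only [Finset.mem_filter, Finset.HasAntidiagonal.mem_antidiagonal] at ha
    exact Dvd.dvd.mul_left (power_sum_dvd hp _ (by omega) (by omega)) _
  exact ((Nat.prime_iff_prime_int.mp hp).dvd_or_dvd h).resolve_left (nat_not_dvd hm (by omega))

theorem elemS_newton {p : ℕ} (hp : p.Prime) (m : ℕ) (hm : 1 ≤ m) (hmp : m + 1 < p)
    (he : Even m) :
    (p : ℤ) ^ 2 ∣ (m : ℤ) * elemS p m + ∑ i : Fin (p - 1), (((i : ℕ) : ℤ) + 1) ^ m := by
  rw [newton_int, he.add_one.neg_one_pow]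
  have hmem : ((0, m) : ℕ × ℕ) ∈ (Finset.HasAntidiagonal.antidiagonal m).filter (fun a => a.1 < m) := by
    simp; omega
  rw [← Finset.add_sum_erase _ _ hmem]
  simp only [elemS_zero, pow_zero, one_mul]
  have : ∀ x y : ℤ, -1 * (x + y) + x = -y := by intros; ring
  rw [this, dvd_neg]
  apply Finset.dvd_sum
  intro a ha
  simp only [Finset.mem_erase, Finset.mem_filter, Finset.HasAntidiagonal.mem_antidiagonal] at ha
  obtain ⟨h0, h1, h2⟩ := ha
  have h3 : a.1 ≠ 0 := by
    intro h
    apply h0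
    ext <;> simp <;> omega
  rw [pow_two]
  exact mul_dvd_mul (Dvd.dvd.mul_left (elemS_dvd hp _ (by omega) (by omega)) _)
    (power_sum_dvd hp _ (by omega) (by omega))

theorem elemS_bernoulli {p l : ℕ} (hp : p.Prime) (hl : 1 ≤ l) (he : Even l) (hlp : l + 3 ≤ p) :
    PDvd p 2 ((l + 1) * (elemS p (p - l - 1) : ℚ) - p * bernoulli (p - l - 1)) := by
  have hodd : Odd p := hp.odd_of_ne_two (by omega)
  obtain ⟨m, hm⟩ : ∃ m, m = p - l - 1 := ⟨_, rfl⟩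
  rw [← hm]
  have hme : Even m := by
    obtain ⟨a, ha⟩ := hodd
    obtain ⟨b, hb⟩ := he
    exact ⟨a - b, by omega⟩
  have h1 := PDvd.of_int hp (elemS_newton hp m (by omega) (by omega) hme)
  have h2 := power_sum_congr hp m (by omega) (by omega)
  have h3 : PDvd p 2 (((p : ℤ) * elemS p m : ℤ) : ℚ) := PDvd.of_int hp (by
    rw [pow_two]
    exact mul_dvd_mul dvd_rfl (elemS_dvd hp m (by omega) (by omega)))
  have := (h3.sub hp h1).add hp h2
  convert this using 1
  have hpm : (p : ℚ) = m + l + 1 := by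
    have : p = m + l + 1 := by omega
    exact_mod_cast this
  push_cast
  rw [hpm]
  ring

section PolyPart
open Polynomial

/-- `(X+1)(X+2)⋯(X+n)`. -/
noncomputable def risePoly (n : ℕ) : ℤ[X] := ∏ i ∈ Finset.range n, (X + C ((i : ℤ) + 1))

theorem coeff_comp_neg (f : ℤ[X]) (n : ℕ) : (f.comp (-X)).coeff n = (-1) ^ n * f.coeff n := by
  have : (-X : ℤ[X]) = C (-1) * X := by simp
  rw [this, comp_C_mul_X_coeff, mul_comm]

theorem risePoly_refl (n : ℕ) :
    (risePoly n).comp (-X - C ((n : ℤ) + 1)) = (-1) ^ n * risePoly n := by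
  unfold risePoly
  rw [← Finset.prod_range_reflect (fun i : ℕ => (X + C ((i : ℤ) + 1) : ℤ[X])) n]
  rw [prod_comp]
  have : ((-1 : ℤ[X]) ^ n) = ∏ i ∈ Finset.range n, (-1 : ℤ[X]) := by simp
  rw [this, Finset.prod_range_reflect (fun i : ℕ => (X + C ((i : ℤ) + 1) : ℤ[X])) n,
    ← Finset.prod_mul_distrib]
  apply Finset.prod_congr rfl
  intro i hi
  have hi := Finset.mem_range.mp hi
  have e : ((n - 1 - i : ℕ) : ℤ) = n - 1 - i := by omega
  rw [e]
  simp
  ring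

theorem risePoly_split (r : ℕ) : risePoly (2 * (r + 1) - 1) =
    risePoly r * (X + C ((r : ℤ) + 1)) * (risePoly r).comp (X + C ((r : ℤ) + 1)) := by
  have : 2 * (r + 1) - 1 = (r + 1) + r := by omega
  rw [this]
  unfold risePoly
  rw [Finset.prod_range_add, Finset.prod_range_succ, prod_comp]
  congr 1
  apply Finset.prod_congr rfl
  intro i hi
  simp
  ring

/-- `X G(X) G(-X)`. -/
noncomputable def oddPoly (r : ℕ) : ℤ[X] := X * (risePoly r * (risePoly r).comp (-X))

theorem oddPoly_comp (r : ℕ) (hr : Even r) :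
    (oddPoly r).comp (X + C ((r : ℤ) + 1)) = risePoly (2 * (r + 1) - 1) := by
  have h := risePoly_refl r
  rw [hr.neg_one_pow, one_mul] at h
  have e : -(X + C ((r : ℤ) + 1)) = (-X - C ((r : ℤ) + 1) : ℤ[X]) := by ring
  rw [risePoly_split, oddPoly, mul_comp, mul_comp, comp_assoc]
  simp only [neg_comp, X_comp]
  rw [e, h]
  ring

theorem oddPoly_coeff_even (r n : ℕ) (hn : Even n) : (oddPoly r).coeff n = 0 := by
  have h : (oddPoly r).comp (-X) = - oddPoly r := by
    rw [oddPoly, mul_comp, mul_comp, comp_assoc]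
    simp
    ring
  have h2 := congrArg (fun f => coeff f n) h
  simp only [coeff_comp_neg, hn.neg_one_pow, one_mul, coeff_neg] at h2
  omega

theorem eval_mod_cube (f : ℤ[X]) (a : ℤ) :
    a ^ 3 ∣ f.eval a - (f.coeff 0 + f.coeff 1 * a + f.coeff 2 * a ^ 2) := by
  have h0 := f.divX_mul_X_add
  have h1 := f.divX.divX_mul_X_add
  have h2 := f.divX.divX.divX_mul_X_add
  refine ⟨f.divX.divX.divX.eval a, ?_⟩
  have e0 := congrArg (eval a) h0
  have e1 := congrArg (eval a) h1
  have e2 := congrArg (eval a) h2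
  simp only [eval_add, eval_mul, eval_X, eval_C, coeff_divX] at e0 e1 e2
  norm_num at e0 e1 e2
  rw [← e0, ← e1, ← e2]
  ring

theorem risePoly_coeff_cong (r l : ℕ) (hr : Even r) (hl : Even l) :
    ((r : ℤ) + 1) ^ 3 ∣ (risePoly (2 * (r + 1) - 1)).coeff l
      - ((r : ℤ) + 1) * ((l + 1) * (oddPoly r).coeff (l + 1)) := by
  rw [← oddPoly_comp r hr]
  have : (oddPoly r).comp (X + C ((r : ℤ) + 1)) = taylor ((r : ℤ) + 1) (oddPoly r) := rfl
  rw [this, taylor_coeff]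
  have h := eval_mod_cube (hasseDeriv l (oddPoly r)) ((r : ℤ) + 1)
  simp only [hasseDeriv_coeff] at h
  rw [oddPoly_coeff_even r (0 + l) (by simpa using hl),
    oddPoly_coeff_even r (2 + l) (by rw [Nat.even_add]; simp [hl])] at h
  have hc : (1 + l).choose l = l + 1 := by rw [add_comm]; simp
  rw [hc, add_comm 1 l] at h
  convert h using 2
  push_cast
  ring

theorem risePoly_coeff (p k : ℕ) (hk : k ≤ p - 1) :
    (risePoly (p - 1)).coeff k = elemS p (p - 1 - k) := by
  unfold risePoly
  rw [← Fin.prod_univ_eq_prod_range (fun i : ℕ => (X + C ((i : ℤ) + 1) : ℤ[X]))]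
  rw [Finset.prod_X_add_C_coeff _ _ (by simpa using hk)]
  simp [elemS, MvPolynomial.esymm]

theorem risePoly_eval_zero (n : ℕ) : (risePoly n).eval 0 = (n.factorial : ℤ) := by
  unfold risePoly
  rw [eval_prod, ← Finset.prod_range_add_one_eq_factorial]
  push_cast
  simp

theorem oddPoly_coeff_cong {p l : ℕ} (hp : p.Prime) (hl : 2 ≤ l) (he : Even l)
    (hlp : l + 3 ≤ p) :
    (p : ℤ) ^ 2 ∣ (oddPoly (p - 1)).coeff (l + 1)
      - 2 * ((p - 1).factorial : ℤ) * elemS p (p - l - 1) := by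
  rw [oddPoly, coeff_X_mul, coeff_mul]
  have hm1 : ((0, l) : ℕ × ℕ) ∈ Finset.HasAntidiagonal.antidiagonal l := by simp
  have hm2 : ((l, 0) : ℕ × ℕ) ∈ (Finset.HasAntidiagonal.antidiagonal l).erase (0, l) := by
    simp; omega
  rw [← Finset.add_sum_erase _ _ hm1, ← Finset.add_sum_erase _ _ hm2]
  simp only [coeff_comp_neg, he.neg_one_pow, pow_zero, one_mul]
  rw [coeff_zero_eq_eval_zero, risePoly_eval_zero, risePoly_coeff p l (by omega),
    show p - 1 - l = p - l - 1 by omega]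
  have : ∀ x y z : ℤ, x * y + (y * x + z) - 2 * x * y = z := by intros; ring
  rw [this]
  apply Finset.dvd_sum
  intro a ha
  simp only [Finset.mem_erase, Finset.HasAntidiagonal.mem_antidiagonal] at ha
  obtain ⟨h0, h1, h2⟩ := ha
  have h3 : a.1 ≠ 0 := by
    intro h
    apply h1
    ext <;> simp <;> omega
  have h4 : a.2 ≠ 0 := by
    intro h
    apply h0
    ext <;> simp <;> omega
  rw [risePoly_coeff _ _ (by omega), risePoly_coeff _ _ (by omega), pow_two]
  exact mul_dvd_mul (elemS_dvd hp _ (by omega) (by omega))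
    (Dvd.dvd.mul_left (elemS_dvd hp _ (by omega) (by omega)) _)

theorem wilson_int {p : ℕ} (hp : p.Prime) : (p : ℤ) ∣ ((p - 1).factorial : ℤ) + 1 := by
  have := Fact.mk hp
  rw [← ZMod.intCast_zmod_eq_zero_iff_dvd]
  push_cast
  rw [ZMod.wilsons_lemma]
  ring

theorem factorial_cong {p : ℕ} (hp : p.Prime) :
    ∃ u : ℤ, ((2 * p - 1).factorial : ℤ) = p * u ∧ (p : ℤ) ∣ u - 1 := by
  obtain ⟨r, rfl⟩ : ∃ r, p = r + 1 := ⟨p - 1, by have := hp.one_lt; omega⟩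
  have hw := wilson_int hp
  simp only [Nat.add_sub_cancel] at hw
  have h := congrArg (eval 0) (risePoly_split r)
  simp only [eval_mul, eval_add, eval_X, eval_C, eval_comp, zero_add, risePoly_eval_zero] at h
  refine ⟨(r.factorial : ℤ) * (risePoly r).eval ((r : ℤ) + 1), ?_, ?_⟩
  · rw [h]; push_cast; ring
  · have h2 := sub_dvd_eval_sub ((r : ℤ) + 1) 0 (risePoly r)
    rw [risePoly_eval_zero, sub_zero] at h2
    push_cast at hw ⊢
    obtain ⟨c, hc⟩ := hw
    obtain ⟨d, hd⟩ := h2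
    refine ⟨r.factorial * d + c * (r.factorial - 1), ?_⟩
    linear_combination (r.factorial : ℤ) * hd + ((r.factorial : ℤ) - 1) * hc

/-- The elementary symmetric function of the reciprocals. -/
theorem esymm_recip (n l : ℕ) (hl : l ≤ n) :
    (∑ t ∈ Finset.powersetCard l (Finset.range n), ∏ i ∈ t, (1 / ((i : ℚ) + 1))) * n.factorial
      = ((risePoly n).coeff l : ℤ) := by
  unfold risePoly
  rw [Finset.prod_X_add_C_coeff _ _ (by simpa using hl), Finset.sum_mul]
  push_cast
  rw [Finset.card_range]
  symm
  refine Finset.sum_bij' (fun t _ => Finset.range n \ t) (fun t _ => Finset.range n \ t)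
    ?_ ?_ ?_ ?_ ?_
  · intro t ht
    rw [Finset.mem_powersetCard] at ht ⊢
    refine ⟨Finset.sdiff_subset, ?_⟩
    rw [Finset.card_sdiff_of_subset ht.1, ht.2, Finset.card_range]
    omega
  · intro t ht
    rw [Finset.mem_powersetCard] at ht ⊢
    refine ⟨Finset.sdiff_subset, ?_⟩
    rw [Finset.card_sdiff_of_subset ht.1, ht.2, Finset.card_range]
  · intro t ht
    rw [Finset.mem_powersetCard] at ht
    exact Finset.sdiff_sdiff_eq_self ht.1
  · intro t ht
    rw [Finset.mem_powersetCard] at ht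
    exact Finset.sdiff_sdiff_eq_self ht.1
  · intro t ht
    rw [Finset.mem_powersetCard] at ht
    rw [← Finset.prod_range_add_one_eq_factorial]
    push_cast
    rw [← Finset.prod_sdiff ht.1, ← mul_assoc, ← Finset.prod_mul_distrib]
    have h1 : ∏ i ∈ Finset.range n \ t, (1 / ((i : ℚ) + 1) * ((i : ℚ) + 1)) = 1 := by
      apply Finset.prod_eq_one
      intro i _
      have : (i : ℚ) + 1 ≠ 0 := by positivity
      field_simp
    rw [h1, one_mul]

end PolyPart

open Classical in
theorem strictMono_sum (l n : ℕ) :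
    (∑ k ∈ Finset.univ.filter (fun k : Fin l → Fin (n + 1) =>
        StrictMono k ∧ ∀ i, 1 ≤ (k i : ℕ)), ∏ i, 1 / ((k i : ℕ) : ℚ))
      = ∑ t ∈ Finset.powersetCard l (Finset.range n), ∏ i ∈ t, (1 / ((i : ℚ) + 1)) := by
  refine Finset.sum_bij (fun k _ => Finset.univ.image (fun i => (k i : ℕ) - 1)) ?_ ?_ ?_ ?_
  · intro k hk
    simp only [Finset.mem_filter, Finset.mem_univ, true_and] at hk
    rw [Finset.mem_powersetCard]
    constructor
    · intro x hx
      simp only [Finset.mem_image, Finset.mem_univ, true_and] at hx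
      obtain ⟨i, rfl⟩ := hx
      have := (k i).isLt
      have := hk.2 i
      simp; omega
    · rw [Finset.card_image_of_injective]
      · simp
      · intro i j hij
        have h1 := hk.2 i
        have h2 := hk.2 j
        apply hk.1.injective
        ext
        simp only at hij
        omega
  · intro k hk k' hk' h
    simp only [Finset.mem_filter, Finset.mem_univ, true_and] at hk hk'
    have key : ∀ f : Fin l → Fin (n + 1), (StrictMono f ∧ ∀ i, 1 ≤ (f i : ℕ)) →
        StrictMono (fun i => (f i : ℕ) - 1) := by
      intro f hf i j hij
      have h1 := hf.1 hij
      have h2 := hf.2 i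
      have h3 : (f i : ℕ) < f j := h1
      simp only
      omega
    have h5 : (fun i => (k i : ℕ) - 1) = (fun i => (k' i : ℕ) - 1) := by
      rw [← (key k hk).range_inj (key k' hk')]
      have := congrArg (fun s : Finset ℕ => (s : Set ℕ)) h
      simpa using this
    funext i
    have h6 := congrFun h5 i
    have h1 := hk.2 i
    have h2 := hk'.2 i
    ext
    omega
  · intro t ht
    rw [Finset.mem_powersetCard] at ht
    have hlt : ∀ i, t.orderEmbOfFin ht.2 i < n := fun i =>
      Finset.mem_range.mp (ht.1 (Finset.orderEmbOfFin_mem t ht.2 i))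
    refine ⟨fun i => ⟨t.orderEmbOfFin ht.2 i + 1, by have := hlt i; omega⟩, ?_, ?_⟩
    · simp only [Finset.mem_filter, Finset.mem_univ, true_and]
      refine ⟨?_, fun i => by simp⟩
      intro i j hij
      have := (t.orderEmbOfFin ht.2).strictMono hij
      rw [Fin.lt_def]
      simp only
      omega
    · simp only [Nat.add_sub_cancel]
      exact Finset.image_orderEmbOfFin_univ t ht.2
  · intro k hk
    simp only [Finset.mem_filter, Finset.mem_univ, true_and] at hk
    rw [Finset.prod_image]
    · apply Finset.prod_congr rfl
      intro i _
      have := hk.2 i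
      rw [Nat.cast_sub this]
      simp
    · intro i _ j _ hij
      have h1 := hk.2 i
      have h2 := hk.2 j
      apply hk.1.injective
      ext
      simp only at hij
      omega

theorem mhs_ones_aux (s : List ℕ) (hs : ∀ i, s.get i = 1) (n : ℕ) :
    mhs s n = ∑ t ∈ Finset.powersetCard s.length (Finset.range n),
      ∏ i ∈ t, (1 / ((i : ℚ) + 1)) := by
  rw [← strictMono_sum, mhs]
  simp only [hs, pow_one]

theorem mhs_ones (l n : ℕ) (hl : l ≤ n) :
    mhs (List.replicate l 1) n * n.factorial = ((risePoly n).coeff l : ℤ) := by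
  rw [mhs_ones_aux _ (by simp), List.length_replicate, esymm_recip n l hl]

theorem coeff_bernoulli {p l : ℕ} (hp : p.Prime) (hl : 2 ≤ l) (he : Even l)
    (hlp : l + 3 ≤ p) :
    PDvd p 3 (((risePoly (2 * p - 1)).coeff l : ℚ) + 2 * p ^ 2 * bernoulli (p - l - 1)) := by
  have hodd : Odd p := hp.odd_of_ne_two (by omega)
  have h1 := risePoly_coeff_cong (p - 1) l (hp.even_sub_one (by omega)) he
  have e1 : p - 1 + 1 = p := by omega
  have e2 : ((p - 1 : ℕ) : ℤ) + 1 = p := by omega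
  rw [e1, e2] at h1
  have h1' := PDvd.of_int hp h1
  have hP : PDvd p 1 (((p : ℤ)) : ℚ) := PDvd.of_int hp (by simp)
  have h2 := (hP.mul hp (PDvd.int hp ((l : ℤ) + 1))).mul hp
    (PDvd.of_int hp (oddPoly_coeff_cong hp hl he hlp))
  have h3 := (hP.mul hp (PDvd.int hp (2 * ((p - 1).factorial : ℤ)))).mul hp
    (elemS_bernoulli hp (by omega) he hlp)
  have hw : PDvd p 1 ((((p - 1).factorial : ℤ) + 1 : ℤ) : ℚ) :=
    PDvd.of_int hp (by simpa using wilson_int hp)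
  have h4 := ((hP.mul hp hP).mul hp hw).mul hp
    ((PDvd.int hp 2).mul hp (bernoulli_integral hp (p - l - 1) (by omega)))
  have := ((h1'.add hp h2).add hp h3).add hp h4
  convert this using 1
  push_cast
  ring

theorem main_cong {p l : ℕ} (hp : p.Prime) (hl : 2 ≤ l) (he : Even l)
    (hlp : l + 3 ≤ p) :
    PDvd p 2 (mhs (List.replicate l 1) (2 * p - 1) + 2 * p * bernoulli (p - l - 1)) := by
  obtain ⟨u, hu, hu1⟩ := factorial_cong hp
  have hup : ¬ (p : ℤ) ∣ u := by
    intro h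
    have := dvd_sub h hu1
    rw [sub_sub_cancel] at this
    exact (Nat.prime_iff_prime_int.mp hp).not_dvd_one this
  have h1 := mhs_ones l (2 * p - 1) (by omega)
  have hu' : ((2 * p - 1).factorial : ℚ) = p * u := by exact_mod_cast hu
  rw [hu'] at h1
  apply PDvd.cancel hp hup
  apply PDvd.cancel_p hp
  have hP : PDvd p 1 (((p : ℤ)) : ℚ) := PDvd.of_int hp (by simp)
  have h4 := ((hP.mul hp hP).mul hp (PDvd.of_int hp (n := 1) (z := u - 1) (by simpa using hu1))).mul hp
    ((PDvd.int hp 2).mul hp (bernoulli_integral hp (p - l - 1) (by omega)))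
  have := (coeff_bernoulli hp hl he hlp).add hp h4
  convert this using 1
  rw [← h1]
  push_cast
  ring

/-- For even `l ≥ 2` and prime `p ≥ l+3`:
`H({1}^l; 2p-1) ≡ -2p·B_{p-l-1} (mod p²)`, i.e.
`v_p(H({1}^l;2p-1) + 2p·B_{p-l-1}) ≥ 2` (with `v_p(0) = ∞`); in particular `p`
divides the numerator of `H({1}^l; 2p-1)`. -/
theorem stmt19 (l p : ℕ) (hl : 2 ≤ l) (hleven : Even l) (hp : p.Prime)
    (hple : l + 3 ≤ p) :
    (mhs (List.replicate l 1) (2 * p - 1) + 2 * p * bernoulli (p - l - 1) = 0 ∨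
      2 ≤ padicValRat p
        (mhs (List.replicate l 1) (2 * p - 1) + 2 * p * bernoulli (p - l - 1))) ∧
    (p : ℤ) ∣ (mhs (List.replicate l 1) (2 * p - 1)).num := by
  have h := main_cong hp hl hleven hple
  refine ⟨by simpa using h.val hp, ?_⟩
  have h2 : PDvd p 1 ((2 * p : ℚ) * bernoulli (p - l - 1)) := by
    have := (PDvd.of_int hp (n := 1) (z := 2 * (p : ℤ)) (by simp)).mul hp
      (bernoulli_integral hp (p - l - 1) (by omega))
    simpa using this
  have h3 := (h.mono (m := 1) (by norm_num)).sub hp h2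
  rw [add_sub_cancel_right] at h3
  simpa using h3.num_dvd hp
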